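/- Let D be an oriented graph on n vertices with minimum degree δ, 3 ≤ δ ≤ n/3, satisfying the Ore-type condition d(u)+d(v) ≥ n for all non-adjacent u, v. If there is a vertex v₀ with d(v₀) = δ such that the subdigraph induced on N(v₀) is a tournament, then D contains a Hamilton oriented cycle C with σ_max(C) ≥ n − δ − 2. -/

import Mathlib

/-- A digraph given by the arc relation `A` is an oriented graph: no loops and at most
one arc between any two vertices. -/
def IsOriented {V : Type*} (A : V → V → Prop) : Prop :=
  ∀ u v, A u v → u ≠ v ∧ ¬ A v u

/-- The degree of `v` in the underlying graph of the digraph `A`. -/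
noncomputable def deg {V : Type*} [Fintype V] (A : V → V → Prop) (v : V) : ℕ :=
  Nat.card {u : V // A v u ∨ A u v}

/-- `e` lists the vertices of a Hamilton oriented cycle of the digraph `A`:
consecutive vertices are joined by an arc in one of the two directions. -/
def IsHamOrientedCycle {V : Type*} [Fintype V] (A : V → V → Prop)
    (e : ZMod (Fintype.card V) ≃ V) : Prop :=
  ∀ i, A (e i) (e (i + 1)) ∨ A (e (i + 1)) (e i)

/-- The number of forward arcs of the oriented cycle listed by `e`. -/
noncomputable def sigmaPlus {V : Type*} [Fintype V] (A : V → V → Prop)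
    (e : ZMod (Fintype.card V) ≃ V) : ℕ :=
  Nat.card {i : ZMod (Fintype.card V) // A (e i) (e (i + 1))}

/-- The number of backward arcs of the oriented cycle listed by `e`. -/
noncomputable def sigmaMinus {V : Type*} [Fintype V] (A : V → V → Prop)
    (e : ZMod (Fintype.card V) ≃ V) : ℕ :=
  Nat.card {i : ZMod (Fintype.card V) // A (e (i + 1)) (e i)}

/-- `σ_max` of the oriented cycle listed by `e`. -/
noncomputable def sigmaMax {V : Type*} [Fintype V] (A : V → V → Prop)
    (e : ZMod (Fintype.card V) ≃ V) : ℕ :=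
  max (sigmaPlus A e) (sigmaMinus A e)

/-!
Measure a path by its number of backward arcs. The clique `K` formed by `v₀` and its neighbours
has a Hamilton path between any two of its vertices with at most two backward arcs (Rédei's theorem
and two more arcs). By the Ore condition, every vertex outside `K` has two neighbours in `K`, and
misses at most `δ - 2` vertices of the complement `X` of `K`. It therefore suffices to find a
Hamilton path of `X` with at most `δ - 2` backward arcs: the two arcs joining it to `K` bring the
total to at most `δ + 2`.

Such a path exists in every set `U` in which each vertex misses at most `k ≤ (#U - 3) / 2` others,
with bound `k`; the proof is by induction on `U`. Take a path maximizing its length minus its number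
of backward arcs, and then its length. No path among the vertices missed by it can be spliced into
it with profit, which restricts the ends of such paths; played against the Hamilton path given by
the induction hypothesis, this forces the missed vertices to be independent. Averaging over the
places where a missed vertex can be inserted then leaves enough room to insert all of them at a
cost of two backward arcs each.
-/

section

open scoped Classical Finset

variable {V : Type*} {R A : V → V → Prop} {G : SimpleGraph V}

/-- The underlying graph of the digraph with arc relation `A`. -/
def underlyingGraph (A : V → V → Prop) : SimpleGraph V := SimpleGraph.fromRel A

theorem underlyingGraph_adj {x y : V} :
    (underlyingGraph A).Adj x y ↔ x ≠ y ∧ (A x y ∨ A y x) := Iff.rfl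

/-- The number of pairs of consecutive entries of a list that are not related by `R`: the number of
backward arcs when `R` is the arc relation of a digraph and the list a path of the underlying graph,
the number of missing edges when `R` is the adjacency of a graph and the list is arbitrary. -/
noncomputable def defect (R : V → V → Prop) : List V → ℕ
  | x :: y :: l => (if R x y then 0 else 1) + defect R (y :: l)
  | _ => 0

@[simp] theorem defect_nil : defect R [] = 0 := rfl

@[simp] theorem defect_singleton (x : V) : defect R [x] = 0 := rfl

theorem defect_cons_cons (x y : V) (l : List V) :
    defect R (x :: y :: l) = defect R [x, y] + defect R (y :: l) := rfl

theorem defect_pair (x y : V) : defect R [x, y] = if R x y then 0 else 1 := rfl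

theorem defect_pair_le_one (x y : V) : defect R [x, y] ≤ 1 := by
  rw [defect_pair]; split_ifs <;> omega

theorem defect_append_cons (l₁ : List V) (x : V) (l₂ : List V) :
    defect R (l₁ ++ x :: l₂) = defect R (l₁ ++ [x]) + defect R (x :: l₂) := by
  induction l₁ with
  | nil => simp
  | cons a l₁ ih => cases l₁ <;> grind [defect_cons_cons, defect_singleton]

theorem defect_append_cons_cons (l₁ : List V) (x y : V) (l₂ : List V) :
    defect R (l₁ ++ x :: y :: l₂) =
      defect R (l₁ ++ [x]) + defect R [x, y] + defect R (y :: l₂) := by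
  rw [defect_append_cons, defect_cons_cons, add_assoc]

theorem defect_add_defect_le_defect_append (l₁ l₂ : List V) :
    defect R l₁ + defect R l₂ ≤ defect R (l₁ ++ l₂) := by
  rcases l₁.eq_nil_or_concat' with rfl | ⟨k₁, x, rfl⟩
  · simp
  cases l₂ with
  | nil => simp
  | cons y k₂ =>
    rw [List.append_assoc, List.singleton_append, defect_append_cons_cons]
    omega

theorem defect_append_le (l₁ l₂ : List V) :
    defect R (l₁ ++ l₂) ≤ defect R l₁ + defect R l₂ + 1 := by
  rcases l₁.eq_nil_or_concat' with rfl | ⟨k₁, x, rfl⟩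
  · simp
  cases l₂ with
  | nil => simp
  | cons y k₂ =>
    have := defect_pair_le_one (R := R) x y
    rw [List.append_assoc, List.singleton_append, defect_append_cons_cons]
    omega

theorem defect_append_swap_le (X M N : List V) :
    defect R (X ++ (N ++ M)) ≤ defect R (X ++ (M ++ N)) + 2 := by
  have h₁ := defect_append_le (R := R) X (N ++ M)
  have h₂ := defect_append_le (R := R) N M
  have h₃ := defect_add_defect_le_defect_append (R := R) X (M ++ N)
  have h₄ := defect_add_defect_le_defect_append (R := R) M N
  omega

theorem defect_swap_append_le (M N Y : List V) :
    defect R (N ++ (M ++ Y)) ≤ defect R (M ++ (N ++ Y)) + 2 := by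
  have h₁ := defect_append_le (R := R) N (M ++ Y)
  have h₂ := defect_append_le (R := R) M Y
  have h₃ := defect_add_defect_le_defect_append (R := R) M (N ++ Y)
  have h₄ := defect_add_defect_le_defect_append (R := R) N Y
  omega

theorem defect_append_of_rel {l₁ l₂ : List V} (h : ∀ x ∈ l₁.getLast?, ∀ y ∈ l₂.head?, R x y) :
    defect R (l₁ ++ l₂) = defect R l₁ + defect R l₂ := by
  rcases l₁.eq_nil_or_concat' with rfl | ⟨k₁, x, rfl⟩
  · simp
  cases l₂ with
  | nil => simp
  | cons y k₂ =>
    rw [List.append_assoc, List.singleton_append, defect_append_cons_cons, defect_pair,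
      if_pos (h x (by simp) y (by simp)), add_zero]

theorem defect_reverse (l : List V) : defect R l.reverse = defect (flip R) l := by
  induction l with
  | nil => rfl
  | cons x l ih =>
    cases l with
    | nil => rfl
    | cons y l =>
      rw [defect_cons_cons, ← ih, List.reverse_cons, List.reverse_cons, List.append_assoc]
      simp only [List.singleton_append, defect_append_cons_cons, defect_singleton, add_zero]
      exact add_comm _ _

theorem defect_eq_zero_iff {l : List V} : defect R l = 0 ↔ l.IsChain R := by
  induction l with
  | nil => simp
  | cons x l ih =>
    cases l with
    | nil => simp
    | cons y l =>
      rw [defect_cons_cons, add_eq_zero, ih, List.isChain_cons_cons, defect_pair]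
      simp

theorem exists_not_rel_of_defect_pos {l : List V} (h : 0 < defect R l) :
    ∃ l₁ x y l₂, l = l₁ ++ x :: y :: l₂ ∧ ¬ R x y := by
  contrapose! h
  exact (defect_eq_zero_iff.2 (List.isChain_iff_forall_rel_of_append_cons_cons.2
    fun _ _ _ _ e => h _ _ _ _ e)).le

theorem defect_pair_add_defect_swap_le {x y : V} (h : (underlyingGraph A).Adj x y) :
    defect A [x, y] + defect A [y, x] ≤ 1 := by
  rw [defect_pair, defect_pair]
  rcases (underlyingGraph_adj.1 h).2 with h | h <;> simp only [h, if_true] <;> split_ifs <;> omega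

theorem defect_add_defect_reverse_lt_length {l : List V} (hl : l ≠ [])
    (hc : l.IsChain (underlyingGraph A).Adj) : defect A l + defect A l.reverse < l.length := by
  rw [defect_reverse]
  induction hc with
  | nil => contradiction
  | singleton => simp
  | @cons_cons x y l h _ ih =>
    have h₁ := ih (by simp)
    have h₂ : defect A [x, y] + defect (flip A) [x, y] ≤ 1 := defect_pair_add_defect_swap_le h
    rw [defect_cons_cons, defect_cons_cons (R := flip A), List.length_cons]
    omega

theorem countP_dropLast_add_countP_tail_le {P₁ P₂ : V → Prop} {Q : List V}
    (h : ∀ l₁ x y l₂, Q = l₁ ++ x :: y :: l₂ → P₁ x → ¬ P₂ y) :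
    Q.dropLast.countP (P₁ ·) + Q.tail.countP (P₂ ·) ≤ Q.length - 1 := by
  induction Q with
  | nil => simp
  | cons x Q ih =>
    cases Q with
    | nil => simp
    | cons y Q =>
      have h₀ := h [] x y Q rfl
      have h₁ := ih fun l₁ a b l₂ e => h (x :: l₁) a b l₂ (by rw [e, List.cons_append])
      simp only [List.dropLast_cons_cons, List.tail_cons, List.countP_cons, List.length_cons,
        decide_eq_true_eq] at h₁ ⊢
      split_ifs <;> grind

theorem exists_consecutive_of_length_lt_countP {P₁ P₂ : V → Prop} {Q : List V}
    (h : Q.length + 1 < Q.countP (P₁ ·) + Q.countP (P₂ ·)) :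
    ∃ l₁ x y l₂, Q = l₁ ++ x :: y :: l₂ ∧ P₁ x ∧ P₂ y := by
  contrapose! h
  have h₀ := countP_dropLast_add_countP_tail_le h
  rcases Q.eq_nil_or_concat with rfl | ⟨k, z, hz⟩
  · simp
  have h₁ : Q.countP (P₁ ·) ≤ Q.dropLast.countP (P₁ ·) + 1 := by
    rw [hz, List.concat_eq_append, List.dropLast_concat, List.countP_append]
    exact Nat.add_le_add_left List.countP_le_length _
  cases Q with
  | nil => simp
  | cons x k =>
    simp only [List.tail_cons, List.countP_cons (p := (P₂ ·)), List.length_cons] at h₀ h₁ ⊢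
    split_ifs <;> omega

theorem countP_add_countP_add_le_length {P₁ P₂ : V → Prop} {Q : List V} {g : ℕ} (hg : 0 < g)
    (h : ∀ X C Y, Q = X ++ (C ++ Y) → (∀ x ∈ X.getLast?, P₁ x) → (∀ y ∈ Y.head?, P₂ y) →
      g ≤ C.length) :
    Q.countP (P₁ ·) + Q.countP (P₂ ·) + g ≤ Q.length := by
  -- Scanning from left to right, `C` is the stretch since the last entry satisfying `P₁`.
  suffices key : ∀ Y X C, Q = X ++ (C ++ Y) → (∀ x ∈ X.getLast?, P₁ x) →
      Y.countP (P₁ ·) + Y.countP (P₂ ·) + g ≤ min g C.length + Y.length by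
    simpa using key Q [] [] rfl (by simp)
  intro Y
  induction Y with
  | nil => intro X C hQ hX; simpa using h X C [] hQ hX (by simp)
  | cons y Y ih =>
    intro X C hQ hX
    have hgap := h X C (y :: Y) hQ hX
    have hkeep := ih X (C ++ [y]) (by simp [hQ]) hX
    have hreset := ih (X ++ (C ++ [y])) [] (by simp [hQ])
    simp only [List.countP_cons, List.length_cons, List.length_append, List.length_nil,
      List.head?_cons, Option.mem_some_iff, forall_eq', decide_eq_true_eq,
      ← List.append_assoc, List.getLast?_concat] at hgap hkeep hreset ⊢
    by_cases h₁ : P₁ y <;> by_cases h₂ : P₂ y <;> grind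

theorem defect_add_mul_le_of_le_defect_insert {w : V} {Q : List V} {m : ℕ}
    (h : ∀ X B Y, Q = X ++ (B ++ Y) → (∀ x ∈ X.getLast?, (underlyingGraph A).Adj x w) →
      (∀ y ∈ Y.head?, (underlyingGraph A).Adj w y) →
      defect A Q + m ≤ defect A (X ++ w :: Y) + m * B.length) :
    defect A Q + m * (Q.countP ((underlyingGraph A).Adj w ·) + 1) ≤
      Q.countP ((underlyingGraph A).Adj w ·) + m * Q.countP (¬ (underlyingGraph A).Adj w ·) := by
  -- `defect A [w, y] + defect A [y, w] ≤ 1` makes the bounds obtained at the successive neighbours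
  -- of `w` telescope.
  suffices key : ∀ Y X B, Q = X ++ (B ++ Y) → (∀ x ∈ X.getLast?, (underlyingGraph A).Adj x w) →
      defect A Q + m * (Y.countP ((underlyingGraph A).Adj w ·) + 1) ≤
        defect A (X ++ [w]) + Y.countP ((underlyingGraph A).Adj w ·) +
          m * (B.length + Y.countP (¬ (underlyingGraph A).Adj w ·)) by
    simpa using key Q [] [] rfl (by simp)
  intro Y
  induction Y with
  | nil => intro X B hQ hX; simpa using h X B [] hQ hX (by simp)
  | cons y Y ih =>
    intro X B hQ hX
    by_cases hy : (underlyingGraph A).Adj w y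
    · have h₁ := h X B (y :: Y) hQ hX (by simpa using hy)
      have h₂ := ih (X ++ (B ++ [y])) [] (by simp [hQ]) (by simpa using hy.symm)
      have h₃ := defect_pair_add_defect_swap_le hy
      have e₁ := defect_append_cons_cons (R := A) X w y Y
      have e₂ := defect_append_cons_cons (R := A) (X ++ B) y w []
      have e₃ := defect_append_cons (R := A) (X ++ B) y Y
      simp only [hQ, List.append_assoc, List.cons_append, List.nil_append, defect_singleton,
        List.length_nil, List.countP_cons, hy, decide_true, decide_false, not_true, if_true] at *
      simp only [Bool.false_eq_true, if_false, mul_add, mul_one, mul_zero] at *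
      omega
    · simpa [List.countP_cons, hy, add_assoc, add_comm, add_left_comm] using
        ih X (B ++ [y]) (by simp [hQ]) hX

/-- `L` lists the vertices of a path of `G` all of whose vertices lie in `S`. -/
structure IsPathIn (G : SimpleGraph V) (S : Finset V) (L : List V) : Prop where
  nodup : L.Nodup
  mem : ∀ x ∈ L, x ∈ S
  isChain : L.IsChain G.Adj

namespace IsPathIn

variable {S T : Finset V} {L Q X B Y : List V} {w : V}

theorem nil : IsPathIn G S [] := ⟨List.nodup_nil, by simp, List.isChain_nil⟩

theorem singleton (hw : w ∈ S) : IsPathIn G S [w] :=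
  ⟨List.nodup_singleton w, by simpa using hw, List.isChain_singleton w⟩

theorem mono (h : IsPathIn G S L) (hST : S ⊆ T) : IsPathIn G T L :=
  ⟨h.nodup, fun x hx => hST (h.mem x hx), h.isChain⟩

theorem reverse (h : IsPathIn G S L) : IsPathIn G S L.reverse :=
  ⟨List.nodup_reverse.2 h.nodup, fun x hx => h.mem x (List.mem_reverse.1 hx),
    List.isChain_reverse.2 (h.isChain.imp fun _ _ hxy => hxy.symm)⟩

theorem of_infix (h : IsPathIn G S L) (hQ : Q <:+: L) : IsPathIn G S Q :=
  ⟨h.nodup.sublist hQ.sublist, fun x hx => h.mem x (hQ.subset hx), h.isChain.infix hQ⟩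

theorem length_le (h : IsPathIn G S L) : L.length ≤ #S := by
  rw [← List.toFinset_card_of_nodup h.nodup]
  exact Finset.card_le_card fun x hx => h.mem x (List.mem_toFinset.1 hx)

theorem toFinset_eq (h : IsPathIn G S L) (hL : L.length = #S) : L.toFinset = S :=
  Finset.eq_of_subset_of_card_le (fun x hx => h.mem x (List.mem_toFinset.1 hx))
    (by rw [List.toFinset_card_of_nodup h.nodup, hL])

theorem append (hX : IsPathIn G S X) (hY : IsPathIn G S Y) (hXY : X.Disjoint Y)
    (hj : ∀ x ∈ X.getLast?, ∀ y ∈ Y.head?, G.Adj x y) : IsPathIn G S (X ++ Y) :=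
  ⟨List.nodup_append'.2 ⟨hX.nodup, hY.nodup, hXY⟩,
    fun x hx => (List.mem_append.1 hx).elim (hX.mem x) (hY.mem x),
    List.isChain_append.2 ⟨hX.isChain, hY.isChain, hj⟩⟩

theorem perm (h : IsPathIn G S L) (hQ : Q.Perm L) (hc : Q.IsChain G.Adj) : IsPathIn G S Q :=
  ⟨hQ.nodup_iff.2 h.nodup, fun x hx => h.mem x (hQ.mem_iff.1 hx), hc⟩

theorem swap {M N : List V} (h : IsPathIn G S (X ++ (M ++ (N ++ Y)))) (hM : M ≠ []) (hN : N ≠ [])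
    (hXN : ∀ x ∈ X.getLast?, ∀ y ∈ N.head?, G.Adj x y)
    (hNM : ∀ x ∈ N.getLast?, ∀ y ∈ M.head?, G.Adj x y)
    (hMY : ∀ x ∈ M.getLast?, ∀ y ∈ Y.head?, G.Adj x y) : IsPathIn G S (X ++ (N ++ (M ++ Y))) := by
  refine h.perm (.append_left X (by simpa using List.perm_append_comm.append_right Y)) ?_
  have hc := h.isChain
  simp only [List.isChain_append, List.head?_append_of_ne_nil _ hN,
    List.head?_append_of_ne_nil _ hM] at hc ⊢
  exact ⟨hc.1, ⟨hc.2.1.2.1.1, ⟨hc.2.1.1, hc.2.1.2.1.2.1, hMY⟩, hNM⟩, hXN⟩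

theorem replace (hQ : IsPathIn G S (X ++ (B ++ Y))) (hL : IsPathIn G S L) (hne : L ≠ [])
    (hdisj : L.Disjoint (X ++ (B ++ Y)))
    (hXL : ∀ x ∈ X.getLast?, ∀ y ∈ L.head?, G.Adj x y)
    (hLY : ∀ x ∈ L.getLast?, ∀ y ∈ Y.head?, G.Adj x y) : IsPathIn G S (X ++ (L ++ Y)) := by
  simp only [List.disjoint_append_right] at hdisj
  have hXBY := List.nodup_append'.1 hQ.nodup
  refine (hQ.of_infix ⟨[], B ++ Y, by simp⟩).append
    (hL.append (hQ.of_infix ⟨X ++ B, [], by simp⟩) hdisj.2.2 hLY) ?_ ?_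
  · exact List.disjoint_append_right.2 ⟨hdisj.1.symm, (List.disjoint_append_right.1 hXBY.2.2).2⟩
  · rwa [List.head?_append_of_ne_nil _ hne]

theorem replace_singleton (hQ : IsPathIn G S (X ++ (B ++ Y))) (hw : w ∈ S)
    (hwQ : w ∉ X ++ (B ++ Y)) (hX : ∀ x ∈ X.getLast?, G.Adj x w)
    (hY : ∀ y ∈ Y.head?, G.Adj w y) : IsPathIn G S (X ++ w :: Y) :=
  hQ.replace (.singleton hw) (by simp) (by simpa using hwQ) (by simpa using hX) (by simpa using hY)

end IsPathIn

/-- The number of vertices of `S` other than `u` that are not adjacent to `u`. -/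
noncomputable def codegIn (G : SimpleGraph V) (S : Finset V) (u : V) : ℕ :=
  #{x ∈ S | x ≠ u ∧ ¬ G.Adj u x}

section codegIn

variable {S T : Finset V} {Q : List V} {u x : V}

theorem codegIn_mono (h : S ⊆ T) (u : V) : codegIn G S u ≤ codegIn G T u :=
  Finset.card_le_card (Finset.filter_subset_filter _ h)

theorem codegIn_add_codegIn_sdiff (h : T ⊆ S) (u : V) :
    codegIn G T u + codegIn G (S \ T) u = codegIn G S u := by
  rw [codegIn, codegIn, codegIn, ← Finset.card_union_of_disjoint
    (Finset.disjoint_filter_filter Finset.disjoint_sdiff), ← Finset.filter_union,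
    Finset.union_sdiff_of_subset h]

theorem card_adj_add_codegIn (hu : u ∉ S) : #{x ∈ S | G.Adj u x} + codegIn G S u = #S := by
  rw [← Finset.card_filter_add_card_filter_not (s := S) (G.Adj u ·), codegIn]
  congr 2
  exact Finset.filter_congr fun x hx => and_iff_right (ne_of_mem_of_not_mem hx hu)

theorem card_adj_add_codegIn_add_one (hu : u ∈ S) :
    #{x ∈ S | G.Adj u x} + codegIn G S u + 1 = #S := by
  rw [← Finset.card_erase_add_one hu, ← card_adj_add_codegIn (G := G) (S.notMem_erase u), codegIn,
    codegIn, Finset.filter_erase, Finset.filter_erase, Finset.erase_eq_of_notMem (by simp),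
    Finset.erase_eq_of_notMem (by simp)]

theorem codegIn_add_one_of_independent (hind : ∀ x ∈ S, ∀ y ∈ S, ¬ G.Adj x y) (hu : u ∈ S) :
    codegIn G S u + 1 = #S := by
  rw [← card_adj_add_codegIn_add_one (G := G) hu, Finset.filter_false_of_mem (hind u hu),
    Finset.card_empty, zero_add]

theorem codegIn_pos (hx : x ∈ S) (hxu : x ≠ u) (hadj : ¬ G.Adj u x) : 0 < codegIn G S u :=
  Finset.card_pos.2 ⟨x, Finset.mem_filter.2 ⟨hx, hxu, hadj⟩⟩

theorem countP_eq_card_filter (p : V → Prop) (hQ : Q.Nodup) :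
    Q.countP (p ·) = #{x ∈ Q.toFinset | p x} := by
  rw [List.countP_eq_length_filter, ← List.toFinset_card_of_nodup (hQ.filter _),
    List.toFinset_filter]
  simp

end codegIn

namespace IsPathIn

variable {S : Finset V} {Q : List V} {u : V}

theorem countP_adj_add_codegIn (hQ : IsPathIn G S Q) (hu : u ∉ Q) :
    Q.countP (G.Adj u ·) + codegIn G S u = Q.length + codegIn G (S \ Q.toFinset) u := by
  have h₁ := card_adj_add_codegIn (G := G) (mt List.mem_toFinset.1 hu)
  have h₂ := codegIn_add_codegIn_sdiff (G := G)
    (fun x hx => hQ.mem x (List.mem_toFinset.1 hx) : Q.toFinset ⊆ S) u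
  rw [List.toFinset_card_of_nodup hQ.nodup] at h₁
  rw [countP_eq_card_filter _ hQ.nodup]
  omega

theorem card_sdiff_toFinset_add_length (hQ : IsPathIn G S Q) :
    #(S \ Q.toFinset) + Q.length = #S := by
  rw [← List.toFinset_card_of_nodup hQ.nodup]
  exact Finset.card_sdiff_add_card_eq_card fun x hx => hQ.mem x (List.mem_toFinset.1 hx)

theorem length_le_countP_adj_add_codegIn (hQ : IsPathIn G S Q) (hu : u ∉ Q) :
    Q.length ≤ Q.countP (G.Adj u ·) + codegIn G S u :=
  (hQ.countP_adj_add_codegIn hu).ge.trans' (Nat.le_add_right _ _)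

theorem countP_not_adj_add_codegIn (hQ : IsPathIn G S Q) (hu : u ∉ Q) :
    Q.countP (¬ G.Adj u ·) + codegIn G (S \ Q.toFinset) u = codegIn G S u := by
  have h₁ := hQ.countP_adj_add_codegIn hu
  have h₂ := List.length_eq_countP_add_countP (p := (G.Adj u ·)) (l := Q)
  simp only [decide_eq_true_eq] at h₂
  omega

theorem exists_notMem (hQ : IsPathIn G S Q) (hlen : Q.length < #S) : ∃ v ∈ S, v ∉ Q := by
  have := hQ.card_sdiff_toFinset_add_length
  obtain ⟨v, hv⟩ := Finset.card_pos.1 (show 0 < #(S \ Q.toFinset) by omega)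
  exact ⟨v, by simpa using hv⟩

end IsPathIn

section Ore

open scoped List
variable {S : Finset V} {L X M Y : List V} {q q' : V}

theorem defect_reverse_of_symm (hR : ∀ x y, R x y → R y x) (l : List V) :
    defect R l.reverse = defect R l := by
  rw [defect_reverse, show flip R = R from funext₂ fun x y => propext ⟨hR y x, hR x y⟩]

theorem defect_append_reverse_append_lt (hR : ∀ x y, R x y → R y x) (hM : M ≠ [])
    (hX : ∀ x ∈ X.getLast?, ∀ y ∈ M.getLast?, R x y)
    (hY : ∀ x ∈ M.head?, ∀ y ∈ Y.head?, R x y)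
    (h : defect R X + defect R M + defect R Y < defect R (X ++ (M ++ Y))) :
    defect R (X ++ (M.reverse ++ Y)) < defect R (X ++ (M ++ Y)) := by
  rw [defect_append_of_rel (l₂ := M.reverse ++ Y)
      (by rwa [List.head?_append_of_ne_nil _ (by simpa), List.head?_reverse]),
    defect_append_of_rel (by rwa [List.getLast?_reverse]), defect_reverse_of_symm hR]
  omega

theorem exists_consecutive_adj_of_not_adj (hL : L.Nodup) (hX : L = X ++ q :: q' :: Y)
    (hqq' : ¬ G.Adj q q')
    (hcodeg : codegIn G L.toFinset q + codegIn G L.toFinset q' + 3 ≤ L.length) :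
    (∃ U c d Z, X ++ [q] = U ++ c :: d :: Z ∧ G.Adj q c ∧ G.Adj q' d) ∨
      ∃ U c d Z, q' :: Y = U ++ c :: d :: Z ∧ G.Adj q c ∧ G.Adj q' d := by
  by_contra! hno
  have h₁ := countP_dropLast_add_countP_tail_le hno.1
  have h₂ := countP_dropLast_add_countP_tail_le hno.2
  have hq := card_adj_add_codegIn_add_one (G := G) (S := L.toFinset) (u := q) (by simp [hX])
  have hq' := card_adj_add_codegIn_add_one (G := G) (S := L.toFinset) (u := q') (by simp [hX])
  rw [← countP_eq_card_filter _ hL, List.toFinset_card_of_nodup hL] at hq hq'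
  have htail := List.le_countP_tail (p := (G.Adj q' ·)) (l := X ++ [q])
  have hdrop := List.le_countP_tail (p := (G.Adj q ·)) (l := (q' :: Y).reverse)
  rw [List.tail_reverse, List.countP_reverse, List.countP_reverse] at hdrop
  simp only [hX, List.countP_append, List.countP_cons, List.countP_nil, G.irrefl,
    mt SimpleGraph.Adj.symm hqq', List.dropLast_concat, List.length_append, List.length_cons,
    List.length_nil, decide_false, Bool.false_eq_true, if_false, List.tail_cons] at *
  omega

theorem exists_defect_reversal_lt (hL : L.Nodup) (hX : L = X ++ q :: q' :: Y)
    (hqq' : ¬ G.Adj q q')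
    (hcodeg : codegIn G L.toFinset q + codegIn G L.toFinset q' + 3 ≤ L.length) :
    ∃ U M Z, L = U ++ (M ++ Z) ∧ U ≠ [] ∧ Z ≠ [] ∧
      defect G.Adj (U ++ (M.reverse ++ Z)) < defect G.Adj (U ++ (M ++ Z)) := by
  have hdef : defect G.Adj L = defect G.Adj (X ++ [q]) + 1 + defect G.Adj (q' :: Y) := by
    rw [hX, defect_append_cons_cons, defect_pair, if_neg hqq']
  rcases exists_consecutive_adj_of_not_adj hL hX hqq' hcodeg with
    ⟨U, c, d, Z, hU, hc, hd⟩ | ⟨U, c, d, Z, hU, hc, hd⟩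
  · have hUd : X ++ [q] = (U ++ [c]) ++ (d :: Z) := by simp [hU]
    have hlast : (d :: Z).getLast? = some q := by
      rw [← List.getLast?_append_of_ne_nil _ (by simp), ← hUd, List.getLast?_concat]
    have hLU : L = (U ++ [c]) ++ ((d :: Z) ++ (q' :: Y)) := by
      rw [← List.append_assoc, ← hUd, hX]; simp
    refine ⟨U ++ [c], d :: Z, q' :: Y, hLU, by simp, by simp, ?_⟩
    refine defect_append_reverse_append_lt (fun _ _ h => h.symm) (by simp)
      (by simpa [hlast] using hc.symm) (by simpa using hd.symm) ?_
    have := defect_add_defect_le_defect_append (R := G.Adj) (U ++ [c]) (d :: Z)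
    rw [← hLU, hdef, hUd]
    omega
  · have hUd : q' :: Y = (U ++ [c]) ++ (d :: Z) := by simp [hU]
    have hhead : (U ++ [c]).head? = some q' := by
      rw [← List.head?_append_of_ne_nil _ (by simp), ← hUd, List.head?_cons]
    have hLU : L = (X ++ [q]) ++ ((U ++ [c]) ++ (d :: Z)) := by
      rw [← hUd, hX]; simp
    refine ⟨X ++ [q], U ++ [c], d :: Z, hLU, by simp, by simp, ?_⟩
    refine defect_append_reverse_append_lt (fun _ _ h => h.symm) (by simp)
      (by simpa using hc) (by simpa [hhead] using hd) ?_
    have := defect_add_defect_le_defect_append (R := G.Adj) (U ++ [c]) (d :: Z)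
    rw [← hLU, hdef, hUd]
    omega

theorem exists_perm_defect_lt (hL : L.Nodup)
    (hore : ∀ x ∈ L, ∀ y ∈ L, x ≠ y → ¬ G.Adj x y →
      codegIn G L.toFinset x + codegIn G L.toFinset y + 3 ≤ L.length)
    (hpos : 0 < defect G.Adj L) :
    ∃ L', L' ~ L ∧ L'.head? = L.head? ∧ L'.getLast? = L.getLast? ∧
      defect G.Adj L' < defect G.Adj L := by
  obtain ⟨X, q, q', Y, hX, hqq'⟩ := exists_not_rel_of_defect_pos hpos
  have hne : q ≠ q' := by rintro rfl; simp [hX, List.nodup_append] at hL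
  obtain ⟨U, M, Z, rfl, hU, hZ, hlt⟩ := exists_defect_reversal_lt hL hX hqq'
    (hore q (by simp [hX]) q' (by simp [hX]) hne hqq')
  refine ⟨_, (M.reverse_perm.append_right Z).append_left U, ?_, ?_, hlt⟩
  · rw [List.head?_append_of_ne_nil _ hU, List.head?_append_of_ne_nil _ hU]
  · simp only [← List.append_assoc, List.getLast?_append_of_ne_nil _ hZ]

theorem exists_perm_isChain (hL : L.Nodup)
    (hore : ∀ x ∈ L, ∀ y ∈ L, x ≠ y → ¬ G.Adj x y →
      codegIn G L.toFinset x + codegIn G L.toFinset y + 3 ≤ L.length) :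
    ∃ L', L' ~ L ∧ L'.head? = L.head? ∧ L'.getLast? = L.getLast? ∧ L'.IsChain G.Adj := by
  induction hn : defect G.Adj L using Nat.strong_induction_on generalizing L with
  | _ n ih =>
    by_cases hpos : 0 < defect G.Adj L
    · obtain ⟨L₁, hperm, hhead, hlast, hlt⟩ := exists_perm_defect_lt hL hore hpos
      have hfin : L₁.toFinset = L.toFinset := List.toFinset_eq_of_perm _ _ hperm
      obtain ⟨L₂, hperm₂, hhead₂, hlast₂, hchain⟩ := ih _ (hn ▸ hlt) (hperm.nodup_iff.2 hL)
        (by simpa only [hfin, hperm.mem_iff, hperm.length_eq] using hore) rfl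
      exact ⟨L₂, hperm₂.trans hperm, hhead₂.trans hhead, hlast₂.trans hlast, hchain⟩
    · exact ⟨L, .refl L, rfl, rfl, defect_eq_zero_iff.1 (by omega)⟩

theorem exists_isPathIn_between (hore : ∀ x ∈ S, ∀ y ∈ S, x ≠ y → ¬ G.Adj x y →
      codegIn G S x + codegIn G S y + 3 ≤ #S) (hq : q ∈ S) (hq' : q' ∈ S) (hne : q ≠ q') :
    ∃ L, IsPathIn G S L ∧ L.length = #S ∧ L.head? = some q ∧ L.getLast? = some q' := by
  set L := q :: (((S.erase q).erase q').toList ++ [q']) with hLdef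
  have hL : L.Nodup := by
    simp +contextual [hLdef, List.nodup_append, hne, Finset.nodup_toList]
  have hfin : L.toFinset = S := by
    ext x; by_cases x = q <;> by_cases x = q' <;> simp_all
  have hlen : L.length = #S := by rw [← hfin, List.toFinset_card_of_nodup hL]
  obtain ⟨L', hperm, hhead, hlast, hchain⟩ := exists_perm_isChain (G := G) hL
    (by simpa only [hfin, hlen, ← List.mem_toFinset] using hore)
  refine ⟨L', ⟨hperm.nodup_iff.2 hL, fun x hx => ?_, hchain⟩, hperm.length_eq.trans hlen,
    by rw [hhead]; rfl, by rw [hlast, hLdef, ← List.cons_append, List.getLast?_concat]⟩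
  rw [← hfin, List.mem_toFinset]
  exact hperm.mem_iff.1 hx

end Ore

section Optimal

variable {U : Finset V} {Q X B Y L : List V} {w z : V}

/-- `Q` is a path with vertices in `U` for which `Q.length - defect A Q` is as large as possible
and which, subject to this, is as long as possible. -/
structure IsOptimalPath (A : V → V → Prop) (U : Finset V) (Q : List V) : Prop where
  isPathIn : IsPathIn (underlyingGraph A) U Q
  le : ∀ P, IsPathIn (underlyingGraph A) U P → P.length + defect A Q ≤ Q.length + defect A P
  length_le : ∀ P, IsPathIn (underlyingGraph A) U P →
    P.length + defect A Q = Q.length + defect A P → P.length ≤ Q.length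

theorem exists_isOptimalPath (A : V → V → Prop) (U : Finset V) : ∃ Q, IsOptimalPath A U Q := by
  let f (P : List V) : ℕ ×ₗ ℕ := toLex (#U - P.length + defect A P, #U - P.length)
  obtain ⟨Q, hQ, hmin⟩ := exists_minimalFor_of_wellFoundedLT
    (IsPathIn (underlyingGraph A) U) f ⟨[], .nil⟩
  have hle P (hP : IsPathIn (underlyingGraph A) U P) : f Q ≤ f P :=
    (le_total _ _).elim id (hmin hP)
  have hlen := hQ.length_le
  refine ⟨Q, hQ, fun P hP => ?_, fun P hP => ?_⟩ <;>
  · have h₁ := Prod.Lex.toLex_le_toLex.1 (hle P hP)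
    have h₂ := hP.length_le
    simp only at h₁
    omega

namespace IsOptimalPath

theorem length_le_of_replace (hQ : IsOptimalPath A U Q) (hXBY : Q = X ++ (B ++ Y))
    (hL : IsPathIn (underlyingGraph A) U L) (hdisj : L.Disjoint Q)
    (hhead : L.head? = some w) (hlast : L.getLast? = some z)
    (hX : ∀ x ∈ X.getLast?, (underlyingGraph A).Adj x w)
    (hY : ∀ y ∈ Y.head?, (underlyingGraph A).Adj z y) (hlong : defect A L + 2 ≤ L.length) :
    L.length ≤ B.length + defect A L + 1 := by
  subst hXBY
  have hP := hQ.isPathIn.replace hL (by rintro rfl; simp at hhead) hdisj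
    (by simpa [hhead] using hX) (by simpa [hlast] using hY)
  have h₁ := defect_append_le (R := A) X (L ++ Y)
  have h₂ := defect_append_le (R := A) L Y
  have h₃ := defect_add_defect_le_defect_append (R := A) X (B ++ Y)
  have h₄ := defect_add_defect_le_defect_append (R := A) B Y
  have hle := hQ.le _ hP
  have hmax := hQ.length_le _ hP
  simp only [List.length_append] at *
  omega

theorem length_add_length_le (hQ : IsOptimalPath A U Q)
    (hL : IsPathIn (underlyingGraph A) (U \ Q.toFinset) L)
    (hhead : L.head? = some w) (hlast : L.getLast? = some z) (hlong : defect A L + 2 ≤ L.length) :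
    Q.countP ((underlyingGraph A).Adj w ·) + Q.countP ((underlyingGraph A).Adj z ·) + L.length ≤
      Q.length + defect A L + 1 := by
  have hLU := hL.mono Finset.sdiff_subset
  have hdisj : L.Disjoint Q := fun x hxL hxQ => by simpa [hxQ] using hL.mem x hxL
  have h := countP_add_countP_add_le_length (P₁ := ((underlyingGraph A).Adj w ·))
    (P₂ := ((underlyingGraph A).Adj z ·)) (Q := Q) (g := L.length - defect A L - 1) (by omega)
    fun X C Y hXCY hX hY => by
      have := hQ.length_le_of_replace hXCY hLU hdisj hhead hlast (fun x hx => (hX x hx).symm) hY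
        hlong
      omega
  omega

end IsOptimalPath

end Optimal

section Components

variable {S T W : Finset V} {s u : V}

theorem exists_connected_closed_subset (G : SimpleGraph V) (hs : s ∈ W) :
    ∃ T ⊆ W, s ∈ T ∧ (∀ x ∈ T, ∀ y ∈ W, G.Adj x y → y ∈ T) ∧
      ∀ a ∈ T, ∀ b ∈ T, ∃ P, IsPathIn G T P ∧ P.head? = some a ∧ P.getLast? = some b := by
  let T : Finset V := {x ∈ W | ∃ hx : x ∈ W, (G.induce W).Reachable ⟨s, hs⟩ ⟨x, hx⟩}
  have mem_T {x : V} (hx : x ∈ W) : x ∈ T ↔ (G.induce W).Reachable ⟨s, hs⟩ ⟨x, hx⟩ := by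
    simp [T, hx]
  refine ⟨T, Finset.filter_subset _ _, (mem_T hs).2 .rfl, fun x hx y hy hxy => ?_,
    fun a ha b hb => ?_⟩
  · have hxW := (Finset.mem_filter.1 hx).1
    refine (mem_T hy).2 (((mem_T hxW).1 hx).trans (SimpleGraph.Adj.reachable ?_))
    exact hxy
  · have haW := (Finset.mem_filter.1 ha).1
    have hbW := (Finset.mem_filter.1 hb).1
    have hsa := (mem_T haW).1 ha
    obtain ⟨p, hp⟩ := (hsa.symm.trans ((mem_T hbW).1 hb)).exists_isPath
    refine ⟨p.support.map Subtype.val, ⟨hp.support_nodup.map Subtype.val_injective, ?_, ?_⟩, ?_, ?_⟩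
    · simp only [List.mem_map, forall_exists_index, and_imp]
      rintro _ x hx rfl
      exact (mem_T x.2).2 (hsa.trans (p.takeUntil x hx).reachable)
    · exact (List.isChain_map _).2 p.isChain_adj_support
    · rw [List.head?_map, ← p.cons_tail_support]; rfl
    · rw [List.getLast?_map, List.getLast?_eq_some_getLast p.support_ne_nil, p.getLast_support]; rfl

theorem codegIn_add_card_sdiff_of_closed (hTS : T ⊆ S) (hT : ∀ x ∈ T, ∀ y ∈ S, G.Adj x y → y ∈ T)
    (hu : u ∈ T) : codegIn G T u + #(S \ T) = codegIn G S u := by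
  rw [← codegIn_add_codegIn_sdiff hTS, ← card_adj_add_codegIn (G := G) (u := u) (S := S \ T)
    (by simp [hu]), Finset.filter_false_of_mem, Finset.card_empty, zero_add]
  exact fun x hx hux => (Finset.mem_sdiff.1 hx).2 (hT u hu x (Finset.mem_sdiff.1 hx).1 hux)

end Components

section EndBound

variable {U S W : Finset V} {Q : List V}

/-- Every path in `W` has ends of small total codegree: this holds for the vertices missed by an
optimal path, the right-hand side being the gain from splicing `L` into that path. -/
def EndBound (A : V → V → Prop) (W : Finset V) : Prop :=
  ∀ ⦃L w z⦄, IsPathIn (underlyingGraph A) W L → L.head? = some w → L.getLast? = some z →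
    defect A L + 2 ≤ L.length →
    codegIn (underlyingGraph A) W w + codegIn (underlyingGraph A) W z + L.length + 2 ≤
      #W + defect A L

theorem EndBound.of_closed (h : EndBound A W) (hSW : S ⊆ W)
    (hS : ∀ x ∈ S, ∀ y ∈ W, (underlyingGraph A).Adj x y → y ∈ S) : EndBound A S := by
  intro L w z hL hw hz hlong
  have h₁ := h (hL.mono hSW) hw hz hlong
  have h₂ := codegIn_add_card_sdiff_of_closed hSW hS (hL.mem w (List.mem_of_mem_head? hw))
  have h₃ := codegIn_add_card_sdiff_of_closed hSW hS (hL.mem z (List.mem_of_mem_getLast? hz))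
  have h₄ := Finset.card_sdiff_add_card_eq_card hSW
  omega

theorem IsOptimalPath.endBound (hQ : IsOptimalPath A U Q) {k : ℕ}
    (hcodeg : ∀ u ∈ U, codegIn (underlyingGraph A) U u ≤ k) (hU : 2 * k + 3 ≤ #U) :
    EndBound A (U \ Q.toFinset) := by
  intro L w z hL hw hz hlong
  have hmem := hL.mem
  simp only [Finset.mem_sdiff, List.mem_toFinset] at hmem
  obtain ⟨hwU, hwQ⟩ := hmem w (List.mem_of_mem_head? hw)
  obtain ⟨hzU, hzQ⟩ := hmem z (List.mem_of_mem_getLast? hz)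
  have h₁ := hQ.length_add_length_le hL hw hz hlong
  have h₂ := hQ.isPathIn.countP_adj_add_codegIn hwQ
  have h₃ := hQ.isPathIn.countP_adj_add_codegIn hzQ
  have h₄ := hQ.isPathIn.card_sdiff_toFinset_add_length
  have h₅ := hcodeg w hwU
  have h₆ := hcodeg z hzU
  omega

end EndBound

section Connected

variable {S W : Finset V} {L L₁ L₂ : List V} {a b t v w y z : V}

/-- Every set `S` in which all codegrees are at most `k`, where `2 * k + 3 ≤ #S`, has a Hamilton
path with at most `k` backward arcs. -/
def HasForwardHamPath (A : V → V → Prop) (S : Finset V) : Prop :=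
  ∀ k, (∀ u ∈ S, codegIn (underlyingGraph A) S u ≤ k) → 2 * k + 3 ≤ #S →
    ∃ L, IsPathIn (underlyingGraph A) S L ∧ L.length = #S ∧ defect A L ≤ k

namespace EndBound

theorem two_mul_codegIn_add_length_le (h : EndBound A W)
    (hL : IsPathIn (underlyingGraph A) W L) (ha : L.head? = some a) (hb : L.getLast? = some b)
    (hlen : 2 ≤ L.length) :
    2 * (codegIn (underlyingGraph A) W a + codegIn (underlyingGraph A) W b) + L.length + 5 ≤
      2 * #W := by
  have hrev := defect_add_defect_reverse_lt_length (by rintro rfl; simp at hlen) hL.isChain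
  rcases le_total (defect A L) (defect A L.reverse) with hle | hle
  · have := h hL ha hb (by omega)
    omega
  · have := h hL.reverse (by simpa using hb) (by simpa using ha)
      (by rw [List.length_reverse]; omega)
    rw [List.length_reverse] at this
    omega

theorem codegIn_add_codegIn_add_four_le (h : EndBound A W)
    (hL : IsPathIn (underlyingGraph A) W L) (ha : L.head? = some a) (hb : L.getLast? = some b)
    (hab : a ≠ b) :
    codegIn (underlyingGraph A) W a + codegIn (underlyingGraph A) W b + 4 ≤ #W := by
  have hlen : 2 ≤ L.length := by
    rcases L with _ | ⟨x, _ | ⟨y, L⟩⟩ <;> simp_all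
  have := h.two_mul_codegIn_add_length_le hL ha hb hlen
  omega

theorem two_mul_codegIn_add_five_le (h : EndBound A W)
    (hconn : ∀ a ∈ W, ∀ b ∈ W, ∃ P, IsPathIn (underlyingGraph A) W P ∧
      P.head? = some a ∧ P.getLast? = some b) (ha : a ∈ W) (hb : b ∈ W) (hab : a ≠ b) :
    2 * (codegIn (underlyingGraph A) W a + codegIn (underlyingGraph A) W b) + 5 ≤ #W := by
  have hore : ∀ x ∈ W, ∀ y ∈ W, x ≠ y →
      codegIn (underlyingGraph A) W x + codegIn (underlyingGraph A) W y + 4 ≤ #W := by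
    intro x hx y hy hxy
    obtain ⟨P, hP, hPx, hPy⟩ := hconn x hx y hy
    exact h.codegIn_add_codegIn_add_four_le hP hPx hPy hxy
  obtain ⟨L, hL, hlen, hLa, hLb⟩ := exists_isPathIn_between
    (fun x hx y hy hxy _ => (Nat.le_succ _).trans (hore x hx y hy hxy)) ha hb hab
  have h₁ := hore a ha b hb hab
  have h₂ := h.two_mul_codegIn_add_length_le hL hLa hLb (by omega)
  omega

theorem exists_hamPath_through_max (h : EndBound A W) (hW : 1 < #W)
    (hconn : ∀ a ∈ W, ∀ b ∈ W, ∃ P, IsPathIn (underlyingGraph A) W P ∧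
      P.head? = some a ∧ P.getLast? = some b) (hham : HasForwardHamPath A W) :
    ∃ L₁ y L₂, IsPathIn (underlyingGraph A) W (L₁ ++ y :: L₂) ∧ (L₁ ++ y :: L₂).length = #W ∧
      defect A (L₁ ++ y :: L₂) ≤ codegIn (underlyingGraph A) W y ∧ L₁ ≠ [] ∧ L₂ ≠ [] := by
  obtain ⟨y, hy, hmax⟩ := W.exists_max_image (codegIn (underlyingGraph A) W)
    (Finset.card_pos.1 (by omega))
  obtain ⟨x, hx, hxy⟩ := W.exists_mem_ne hW y
  have hk := h.two_mul_codegIn_add_five_le hconn hx hy hxy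
  obtain ⟨L, hL, hlen, hdef⟩ := hham _ hmax (by omega)
  obtain ⟨L₁, L₂, rfl⟩ := List.append_of_mem
    (List.mem_toFinset.1 ((hL.toFinset_eq hlen).symm ▸ hy))
  refine ⟨L₁, y, L₂, hL, hlen, hdef, ?_, ?_⟩
  · rintro rfl
    have := h hL rfl (List.getLast?_eq_some_getLast (by simp)) (by omega)
    omega
  · rintro rfl
    have := h hL (List.head?_eq_some_head (by simp)) List.getLast?_concat (by omega)
    omega

end EndBound

namespace IsPathIn

theorem exists_getLast?_eq_inner (hL : IsPathIn (underlyingGraph A) S (L₁ ++ y :: L₂))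
    (hw : L₁.head? = some w) (ht : L₂.head? = some t) (hz : L₂.getLast? = some z)
    (hcount : L₁.length + 1 <
      L₁.countP ((underlyingGraph A).Adj t ·) + L₁.countP ((underlyingGraph A).Adj z ·)) :
    ∃ L, IsPathIn (underlyingGraph A) S L ∧ L.length = (L₁ ++ y :: L₂).length ∧
      L.head? = some w ∧ L.getLast? = some y ∧ defect A L ≤ defect A (L₁ ++ y :: L₂) + 2 := by
  obtain ⟨X, p, q, Z, rfl, hp, hq⟩ := exists_consecutive_of_length_lt_countP hcount
  have hsplit : (X ++ p :: q :: Z) ++ y :: L₂ =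
      (X ++ [p]) ++ ((q :: Z ++ [y]) ++ (L₂ ++ [])) := by simp
  rw [hsplit] at hL ⊢
  refine ⟨_, hL.swap (by simp) (by rintro rfl; simp at ht) (by simpa [ht] using hp.symm)
    (by simpa [hz] using hq) (by simp), by simp; omega, ?_, ?_, ?_⟩
  · cases X <;> simpa using hw
  · rw [← List.append_assoc, List.append_nil, ← List.append_assoc, List.getLast?_concat]
  · simpa only [List.append_nil] using defect_append_swap_le _ _ _

theorem exists_head?_eq_inner (hL : IsPathIn (underlyingGraph A) S (L₁ ++ y :: L₂))
    (hw : L₁.head? = some w) (hv : L₁.getLast? = some v) (hz : L₂.getLast? = some z)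
    (hcount : L₂.length + 1 <
      L₂.countP ((underlyingGraph A).Adj w ·) + L₂.countP ((underlyingGraph A).Adj v ·)) :
    ∃ L, IsPathIn (underlyingGraph A) S L ∧ L.length = (L₁ ++ y :: L₂).length ∧
      L.head? = some y ∧ L.getLast? = some z ∧ defect A L ≤ defect A (L₁ ++ y :: L₂) + 2 := by
  obtain ⟨X, p, q, Z, rfl, hp, hq⟩ := exists_consecutive_of_length_lt_countP hcount
  have hsplit : L₁ ++ y :: (X ++ p :: q :: Z) =
      [] ++ (L₁ ++ ((y :: X ++ [p]) ++ q :: Z)) := by simp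
  rw [hsplit] at hL ⊢
  refine ⟨_, hL.swap (by rintro rfl; simp at hw) (by simp) (by simp)
    (by simpa [hw, List.getLast?_cons] using hp.symm) (by simpa [hv] using hq), by simp; omega,
    rfl, ?_, ?_⟩
  · simpa [List.getLast?_append, List.getLast?_cons] using hz
  · simpa only [List.nil_append] using defect_swap_append_le _ _ _

end IsPathIn

namespace EndBound

theorem not_adj_of_hamPath (h : EndBound A W)
    (hL : IsPathIn (underlyingGraph A) W (L₁ ++ y :: L₂)) (hlen : (L₁ ++ y :: L₂).length = #W)
    (hdef : defect A (L₁ ++ y :: L₂) ≤ codegIn (underlyingGraph A) W y)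
    (hy : codegIn (underlyingGraph A) W y + 3 ≤ #W)
    (hw : L₁.head? = some w) (hz : L₂.getLast? = some z) : ¬ (underlyingGraph A).Adj z w := by
  intro hzw
  have hne : L₂ ≠ [] := by rintro rfl; simp at hz
  have hhead : (L₁ ++ [y]).head? = some w := by
    rw [List.head?_append_of_ne_nil _ (by rintro rfl; simp at hw), hw]
  have hrot : IsPathIn (underlyingGraph A) W (L₂ ++ (L₁ ++ [y])) := by
    have hsplit : L₁ ++ y :: L₂ = [] ++ ((L₁ ++ [y]) ++ (L₂ ++ [])) := by simp
    rw [hsplit] at hL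
    simpa only [List.append_nil, List.nil_append] using hL.swap (by simp) hne (by simp)
      (by simpa only [hz, hhead, Option.mem_some_iff, forall_eq'] using hzw) (by simp)
  have hdefect := defect_append_le (R := A) L₂ (L₁ ++ [y])
  have hdefect' := defect_add_defect_le_defect_append (R := A) (L₁ ++ [y]) L₂
  have := h hrot (List.head?_eq_some_head (by simp))
    (by rw [← List.append_assoc, List.getLast?_concat])
  simp only [List.append_assoc, List.singleton_append, List.length_append, List.length_cons,
    List.length_nil] at *
  omega

theorem card_le_of_hamPath (h : EndBound A W)
    (hL : IsPathIn (underlyingGraph A) W (L₁ ++ y :: L₂)) (hlen : (L₁ ++ y :: L₂).length = #W)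
    (hdef : defect A (L₁ ++ y :: L₂) ≤ codegIn (underlyingGraph A) W y)
    (hy : codegIn (underlyingGraph A) W y + 4 ≤ #W)
    (hw : L₁.head? = some w) (hv : L₁.getLast? = some v)
    (ht : L₂.head? = some t) (hz : L₂.getLast? = some z)
    (hw₀ : 0 < codegIn (underlyingGraph A) W w) (hz₀ : 0 < codegIn (underlyingGraph A) W z) :
    #W ≤ codegIn (underlyingGraph A) W w + codegIn (underlyingGraph A) W v +
      codegIn (underlyingGraph A) W t + codegIn (underlyingGraph A) W z + 3 := by
  have hL₁ : IsPathIn (underlyingGraph A) W L₁ := hL.of_infix ⟨[], y :: L₂, by simp⟩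
  have hL₂ : IsPathIn (underlyingGraph A) W L₂ := hL.of_infix ⟨L₁ ++ [y], [], by simp⟩
  have hdisj := (List.disjoint_cons_right.1 (List.nodup_append'.1 hL.nodup).2.2).2
  have hwL₂ := hL₂.length_le_countP_adj_add_codegIn (hdisj (List.mem_of_mem_head? hw))
  have hvL₂ := hL₂.length_le_countP_adj_add_codegIn (hdisj (List.mem_of_mem_getLast? hv))
  have htL₁ := hL₁.length_le_countP_adj_add_codegIn fun h' => hdisj h' (List.mem_of_mem_head? ht)
  have hzL₁ := hL₁.length_le_countP_adj_add_codegIn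
    fun h' => hdisj h' (List.mem_of_mem_getLast? hz)
  have hcount₁ : L₁.countP ((underlyingGraph A).Adj t ·) +
      L₁.countP ((underlyingGraph A).Adj z ·) ≤ L₁.length + 1 := by
    by_contra! hcount
    obtain ⟨L, hL', hlen', hLw, hLy, hdef'⟩ := hL.exists_getLast?_eq_inner hw ht hz hcount
    have := h hL' hLw hLy (by omega)
    omega
  have hcount₂ : L₂.countP ((underlyingGraph A).Adj w ·) +
      L₂.countP ((underlyingGraph A).Adj v ·) ≤ L₂.length + 1 := by
    by_contra! hcount
    obtain ⟨L, hL', hlen', hLy, hLz, hdef'⟩ := hL.exists_head?_eq_inner hw hv hz hcount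
    have := h hL' hLy hLz (by omega)
    omega
  rw [List.length_append, List.length_cons] at hlen
  omega

theorem card_le_one (h : EndBound A W)
    (hconn : ∀ a ∈ W, ∀ b ∈ W, ∃ P, IsPathIn (underlyingGraph A) W P ∧
      P.head? = some a ∧ P.getLast? = some b) (hham : HasForwardHamPath A W) : #W ≤ 1 := by
  by_contra! hW
  obtain ⟨L₁, y, L₂, hL, hlen, hdef, hne₁, hne₂⟩ := h.exists_hamPath_through_max hW hconn hham
  obtain ⟨w, hw⟩ : ∃ w, L₁.head? = some w := ⟨_, List.head?_eq_some_head hne₁⟩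
  obtain ⟨v, hv⟩ : ∃ v, L₁.getLast? = some v := ⟨_, List.getLast?_eq_some_getLast hne₁⟩
  obtain ⟨t, ht⟩ : ∃ t, L₂.head? = some t := ⟨_, List.head?_eq_some_head hne₂⟩
  obtain ⟨z, hz⟩ : ∃ z, L₂.getLast? = some z := ⟨_, List.getLast?_eq_some_getLast hne₂⟩
  have hw₁ := List.mem_of_mem_head? hw
  have hv₁ := List.mem_of_mem_getLast? hv
  have ht₂ := List.mem_of_mem_head? ht
  have hz₂ := List.mem_of_mem_getLast? hz
  have hL₁ : IsPathIn (underlyingGraph A) W L₁ := hL.of_infix ⟨[], y :: L₂, by simp⟩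
  have hL₂ : IsPathIn (underlyingGraph A) W L₂ := hL.of_infix ⟨L₁ ++ [y], [], by simp⟩
  obtain ⟨-, hyL₂, hdisj⟩ := List.nodup_append'.1 hL.nodup
  rw [List.disjoint_cons_right] at hdisj
  have hy₂ := h.two_mul_codegIn_add_five_le hconn (hL.mem y (by simp)) (hL₂.mem z hz₂)
    (ne_of_mem_of_not_mem hz₂ (List.nodup_cons.1 hyL₂).1).symm
  have hcodeg {a b : V} (ha : a ∈ L₁) (hb : b ∈ L₂) := h.two_mul_codegIn_add_five_le hconn
    (hL₁.mem a ha) (hL₂.mem b hb) (ne_of_mem_of_not_mem ha fun hb₁ => hdisj.2 hb₁ hb)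
  have hwz := hcodeg hw₁ hz₂
  have hvt := hcodeg hv₁ ht₂
  have hzw := h.not_adj_of_hamPath hL hlen hdef (by omega) hw hz
  have hne : z ≠ w := (ne_of_mem_of_not_mem hw₁ fun hz₁ => hdisj.2 hz₁ hz₂).symm
  have := h.card_le_of_hamPath hL hlen hdef (by omega) hw hv ht hz
    (codegIn_pos (hL₂.mem z hz₂) hne (mt SimpleGraph.Adj.symm hzw))
    (codegIn_pos (hL₁.mem w hw₁) hne.symm hzw)
  omega

end EndBound

end Connected

section Main

variable {U : Finset V} {Q : List V} {k : ℕ} {w : V}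

theorem exists_isPathIn_missing_one (hcodeg : ∀ u ∈ U, codegIn (underlyingGraph A) U u ≤ k)
    (hU : 2 * k + 3 ≤ #U) (ih : ∀ S ⊂ U, HasForwardHamPath A S) :
    ∃ Q, IsPathIn (underlyingGraph A) U Q ∧ Q.length + 1 = #U ∧ defect A Q ≤ k := by
  by_cases hU' : 2 * k + 4 ≤ #U
  · obtain ⟨x, hx⟩ := Finset.card_pos.1 (show 0 < #U by omega)
    have hcard := Finset.card_erase_add_one hx
    have hsub := U.erase_subset x
    obtain ⟨Q, hQ, hlen, hdef⟩ := ih _ (Finset.erase_ssubset hx) k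
      (fun u hu => (codegIn_mono hsub u).trans (hcodeg u (hsub hu))) (by omega)
    exact ⟨Q, hQ.mono hsub, by omega, hdef⟩
  · obtain ⟨a, ha, b, hb, hab⟩ := Finset.one_lt_card.1 (show 1 < #U by omega)
    obtain ⟨L, hL, hlen, -⟩ := exists_isPathIn_between (G := underlyingGraph A) (S := U)
      (fun x hx y hy _ _ => by have := hcodeg x hx; have := hcodeg y hy; omega) ha hb hab
    rcases L with _ | ⟨x, Q⟩
    · rw [List.length_nil] at hlen; omega
    rw [List.length_cons] at hlen
    have hQ : IsPathIn (underlyingGraph A) U Q := hL.of_infix ⟨[x], [], by simp⟩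
    have hrev := defect_add_defect_reverse_lt_length (by rintro rfl; simp at hlen; omega) hQ.isChain
    rcases le_or_gt (defect A Q) k with hle | hlt
    · exact ⟨Q, hQ, hlen, hle⟩
    · exact ⟨Q.reverse, hQ.reverse, by rwa [List.length_reverse], by omega⟩

theorem exists_isPathIn_defect_add_card_le
    (hcodeg : ∀ u ∈ U, codegIn (underlyingGraph A) U u ≤ k)
    (hU : 2 * k + 3 ≤ #U) (ih : ∀ S ⊂ U, HasForwardHamPath A S) :
    ∃ P, IsPathIn (underlyingGraph A) U P ∧ defect A P + #U ≤ P.length + k := by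
  obtain ⟨Q, hQ, hlen, hdef⟩ := exists_isPathIn_missing_one hcodeg hU ih
  obtain ⟨v, hv, hvQ⟩ := hQ.exists_notMem (by omega)
  by_contra! hno
  have hins := defect_add_mul_le_of_le_defect_insert (A := A) (w := v) (Q := Q) (m := 1) <| by
    rintro X B Y rfl hX hY
    have := hno _ (hQ.replace_singleton hv hvQ hX hY)
    simp only [List.length_append, List.length_cons] at *
    omega
  have := hno Q hQ
  have := hQ.countP_not_adj_add_codegIn hvQ
  have := hcodeg v hv
  omega

theorem IsOptimalPath.not_adj_of_notMem (hQ : IsOptimalPath A U Q)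
    (hcodeg : ∀ u ∈ U, codegIn (underlyingGraph A) U u ≤ k) (hU : 2 * k + 3 ≤ #U)
    (ih : ∀ S ⊂ U, HasForwardHamPath A S) :
    ∀ x ∈ U \ Q.toFinset, ∀ y ∈ U \ Q.toFinset, ¬ (underlyingGraph A).Adj x y := by
  intro x hx y hy hxy
  obtain ⟨T, hT, hxT, hclosed, hconn⟩ := exists_connected_closed_subset (underlyingGraph A) hx
  have hxU := (Finset.mem_sdiff.1 hx).1
  have hlen : 0 < Q.length := by
    have := hQ.le [x] (.singleton hxU)
    rw [List.length_singleton, defect_singleton] at this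
    omega
  have hTU : T ⊂ U := by
    refine Finset.ssubset_of_subset_of_ssubset hT
      (Finset.sdiff_ssubset (fun q hq => hQ.isPathIn.mem q (List.mem_toFinset.1 hq)) ?_)
    simpa [List.length_pos_iff] using hlen
  have hbound := (hQ.endBound hcodeg hU).of_closed hT hclosed
  exact (hbound.card_le_one hconn (ih T hTU)).not_gt
    (Finset.one_lt_card.2 ⟨x, hxT, y, hclosed x hxT y hy hxy, hxy.ne⟩)

theorem IsOptimalPath.defect_add_length_add_two_le (hQ : IsOptimalPath A U Q) (hw : w ∈ U)
    (hwQ : w ∉ Q) :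
    defect A Q + Q.length + 2 ≤ 3 * Q.countP (¬ (underlyingGraph A).Adj w ·) := by
  have hins := defect_add_mul_le_of_le_defect_insert (A := A) (w := w) (Q := Q) (m := 2) <| by
    rintro X B Y rfl hX hY
    have hP := hQ.isPathIn.replace_singleton hw hwQ hX hY
    have := hQ.le _ hP
    have := hQ.length_le _ hP
    simp only [List.length_append, List.length_cons] at *
    omega
  have hlen := List.length_eq_countP_add_countP (p := ((underlyingGraph A).Adj w ·)) (l := Q)
  simp only [decide_eq_true_eq] at hlen
  omega

theorem IsPathIn.exists_insert (hQ : IsPathIn (underlyingGraph A) U Q) (hw : w ∈ U) (hwQ : w ∉ Q)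
    (hcount : Q.length + 1 < 2 * Q.countP ((underlyingGraph A).Adj w ·)) :
    ∃ P, IsPathIn (underlyingGraph A) U P ∧ P.toFinset = insert w Q.toFinset ∧
      defect A P ≤ defect A Q + 2 := by
  obtain ⟨X, p, q, Y, rfl, hp, hq⟩ := exists_consecutive_of_length_lt_countP
    (P₁ := (underlyingGraph A).Adj w) (P₂ := (underlyingGraph A).Adj w) (Q := Q) (by omega)
  have hsplit : X ++ p :: q :: Y = (X ++ [p]) ++ ([] ++ q :: Y) := by simp
  rw [hsplit] at hQ hwQ
  refine ⟨(X ++ [p]) ++ w :: q :: Y, hQ.replace_singleton hw hwQ (by simpa using hp.symm)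
    (by simpa using hq), by ext; simp; tauto, ?_⟩
  have := defect_pair_le_one (R := A) p w
  have := defect_pair_le_one (R := A) w q
  rw [List.append_assoc, List.singleton_append, defect_append_cons_cons, defect_append_cons_cons,
    defect_cons_cons w]
  omega

theorem IsPathIn.exists_hamPath_of_independent (hQ : IsPathIn (underlyingGraph A) U Q)
    (hind : ∀ x ∈ U \ Q.toFinset, ∀ y ∈ U \ Q.toFinset, ¬ (underlyingGraph A).Adj x y)
    (hcodeg : ∀ u ∈ U, codegIn (underlyingGraph A) U u ≤ k) (hU : 2 * k + 3 ≤ #U) :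
    ∃ P, IsPathIn (underlyingGraph A) U P ∧ P.length = #U ∧
      defect A P ≤ defect A Q + 2 * #(U \ Q.toFinset) := by
  induction hn : #(U \ Q.toFinset) generalizing Q with
  | zero => exact ⟨Q, hQ, by have := hQ.card_sdiff_toFinset_add_length; omega, by omega⟩
  | succ n ih =>
    obtain ⟨w, hw⟩ := Finset.card_pos.1 (show 0 < #(U \ Q.toFinset) by omega)
    obtain ⟨hwU, hwQ⟩ := Finset.mem_sdiff.1 hw
    rw [List.mem_toFinset] at hwQ
    obtain ⟨P, hP, hPQ, hdef⟩ := hQ.exists_insert hwU hwQ <| by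
      have := hQ.countP_adj_add_codegIn hwQ
      have := codegIn_add_one_of_independent hind hw
      have := hcodeg w hwU
      have := hQ.card_sdiff_toFinset_add_length
      omega
    have hsub : U \ P.toFinset = (U \ Q.toFinset).erase w := by
      rw [hPQ, Finset.sdiff_insert]
    obtain ⟨L, hL, hlen, hdef'⟩ := ih hP
      (fun x hx y hy => by
        rw [hsub] at hx hy
        exact hind x (Finset.mem_of_mem_erase hx) y (Finset.mem_of_mem_erase hy))
      (by rw [hsub, Finset.card_erase_of_mem hw, hn, Nat.add_sub_cancel])
    exact ⟨L, hL, hlen, by omega⟩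

theorem hasForwardHamPath (A : V → V → Prop) (U : Finset V) : HasForwardHamPath A U := by
  induction U using Finset.strongInduction with
  | H U ih =>
  intro k hcodeg hU
  obtain ⟨Q, hQ⟩ := exists_isOptimalPath A U
  have hind := hQ.not_adj_of_notMem hcodeg hU ih
  obtain ⟨P, hP, hlen, hdef⟩ := hQ.isPathIn.exists_hamPath_of_independent hind hcodeg hU
  refine ⟨P, hP, hlen, ?_⟩
  have hcard := hQ.isPathIn.card_sdiff_toFinset_add_length
  rcases (U \ Q.toFinset).eq_empty_or_nonempty with hW | ⟨w, hw⟩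
  · obtain ⟨P₀, hP₀, hdef₀⟩ := exists_isPathIn_defect_add_card_le hcodeg hU ih
    have := hQ.le P₀ hP₀
    have := Finset.card_eq_zero.2 hW
    omega
  · obtain ⟨hwU, hwQ⟩ := Finset.mem_sdiff.1 hw
    rw [List.mem_toFinset] at hwQ
    have := hQ.defect_add_length_add_two_le hwU hwQ
    have := hQ.isPathIn.countP_not_adj_add_codegIn hwQ
    have := codegIn_add_one_of_independent hind hw
    have := hcodeg w hwU
    omega

end Main

section Clique

variable {K : Finset V} {y y' : V}

theorem exists_isPathIn_defect_eq_zero_of_isClique (hK : (underlyingGraph A).IsClique K) :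
    ∃ L, IsPathIn (underlyingGraph A) K L ∧ L.length = #K ∧ defect A L = 0 := by
  induction K using Finset.induction_on with
  | empty => exact ⟨[], .nil, rfl, rfl⟩
  | insert w K hw ih =>
    obtain ⟨Q, hQ, hlen, hdef⟩ := ih (hK.subset (by simp))
    have hwQ : w ∉ Q := fun h => hw (hQ.mem w h)
    have hadj : Q.countP (¬ (underlyingGraph A).Adj w ·) = 0 := by
      refine List.countP_eq_zero.2 fun x hx => ?_
      simpa using hK (by simp) (by simp [hQ.mem x hx]) (ne_of_mem_of_not_mem hx hwQ).symm
    by_contra! hno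
    have hins := defect_add_mul_le_of_le_defect_insert (A := A) (w := w) (Q := Q) (m := 1) <| by
      rintro X B Y rfl hX hY
      have := hno _ ((hQ.mono (K.subset_insert w)).replace_singleton (by simp) hwQ hX hY)
      rw [Finset.card_insert_of_notMem hw, ← hlen] at this
      simp only [List.length_append, List.length_cons] at *
      omega
    omega

theorem exists_isPathIn_between_of_isClique (hK : (underlyingGraph A).IsClique K) (hy : y ∈ K)
    (hy' : y' ∈ K) (hne : y ≠ y') :
    ∃ M, IsPathIn (underlyingGraph A) K M ∧ M.length = #K ∧ M.head? = some y ∧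
      M.getLast? = some y' ∧ defect A M ≤ 2 := by
  have hsub : (K.erase y).erase y' ⊆ K := (Finset.erase_subset _ _).trans (Finset.erase_subset _ _)
  obtain ⟨T, hT, hlen, hdef⟩ := exists_isPathIn_defect_eq_zero_of_isClique (hK.subset hsub)
  have hmem {x : V} (hx : x ∈ T) : x ≠ y' ∧ x ≠ y ∧ x ∈ K := by simpa using hT.mem x hx
  have hTy' : IsPathIn (underlyingGraph A) K (T ++ [y']) := by
    refine (hT.mono hsub).append (.singleton hy') (fun x hx => by simpa using (hmem hx).1) ?_
    intro x hx z hz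
    obtain ⟨hxy', -, hxK⟩ := hmem (List.mem_of_mem_getLast? hx)
    obtain rfl : y' = z := by simpa using hz
    exact hK hxK hy' hxy'
  have hyT : IsPathIn (underlyingGraph A) K ([y] ++ (T ++ [y'])) := by
    refine (IsPathIn.singleton hy).append hTy' ?_ ?_
    · simpa [hne] using fun h => (hmem h).2.1 rfl
    · intro x hx z hz
      obtain rfl : y = x := by simpa using hx
      obtain hzT | rfl : z ∈ T ∨ z = y' := by simpa using List.mem_of_mem_head? hz
      · exact hK hy (hmem hzT).2.2 (hmem hzT).2.1.symm
      · exact hK hy hy' hne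
  refine ⟨_, hyT, ?_, by simp, by rw [← List.append_assoc, List.getLast?_concat], ?_⟩
  · rw [List.length_append, List.length_append, hlen,
      Finset.card_erase_of_mem (Finset.mem_erase.2 ⟨hne.symm, hy'⟩), Finset.card_erase_of_mem hy,
      List.length_singleton, List.length_singleton]
    have := Finset.one_lt_card.2 ⟨y, hy, y', hy', hne⟩
    omega
  · have := defect_append_le (R := A) [y] (T ++ [y'])
    have := defect_append_le (R := A) T [y']
    simp only [defect_singleton] at *
    omega

end Clique

section Cycle

theorem defect_map_range_succ (g : ℕ → V) (n : ℕ) :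
    defect R ((List.range (n + 1)).map g) = #{i ∈ Finset.range n | ¬ R (g i) (g (i + 1))} := by
  induction n with
  | zero => simp
  | succ n ih =>
    rw [List.range_succ, List.range_succ, List.map_append, List.map_append, List.append_assoc,
      List.map_singleton, List.map_singleton, List.singleton_append, defect_append_cons,
      ← List.map_singleton, ← List.map_append, ← List.range_succ, ih, Finset.range_add_one,
      Finset.filter_insert, defect_pair]
    split_ifs <;> simp

theorem card_subtype_zmod (n : ℕ) [NeZero n] (p : ZMod n → Prop) :
    Nat.card {i // p i} = #{i ∈ Finset.range n | p (i : ℕ)} := by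
  rw [Nat.card_eq_fintype_card, Fintype.card_subtype]
  refine Finset.card_nbij' ZMod.val Nat.cast ?_ ?_ ?_ ?_
  · intro i hi
    simpa [ZMod.val_lt] using hi
  · intro i hi
    simpa using (Finset.mem_filter.1 hi).2
  · intro i _
    exact ZMod.natCast_zmod_val i
  · intro i hi
    exact ZMod.val_natCast_of_lt (Finset.mem_range.1 (Finset.mem_filter.1 hi).1)

variable [Fintype V] {C : List V} {s : V}

theorem exists_zmod_equiv_map_range_eq (hC : C.Nodup) (hall : ∀ v, v ∈ C)
    (hs : C.head? = some s) :
    ∃ e : ZMod (Fintype.card V) ≃ V,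
      (List.range (Fintype.card V + 1)).map (fun i => e (i : ℕ)) = C ++ [s] := by
  have hlen : C.length = Fintype.card V := by
    rw [← List.toFinset_card_of_nodup hC, ← Finset.card_univ]
    congr; ext; simp [hall]
  have : NeZero (Fintype.card V) := ⟨(Fintype.card_pos_iff.2 ⟨s⟩).ne'⟩
  let f (i : ZMod (Fintype.card V)) : V := C[i.val]'(hlen.symm ▸ i.val_lt)
  have hf : f.Bijective := by
    refine (Fintype.bijective_iff_surjective_and_card f).2 ⟨fun v => ?_, ZMod.card _⟩
    obtain ⟨i, hi, rfl⟩ := List.mem_iff_getElem.1 (hall v)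
    exact ⟨i, by simp only [f, ZMod.val_natCast_of_lt (hlen ▸ hi)]⟩
  refine ⟨.ofBijective f hf, List.ext_getElem (by simp [hlen]) fun i hi _ => ?_⟩
  rw [List.getElem_map, List.getElem_range]
  rcases (Nat.lt_succ_iff.1 (by simpa using hi)).lt_or_eq with hi | rfl
  · rw [List.getElem_append_left (hlen ▸ hi)]
    simp only [Equiv.ofBijective_apply, f, ZMod.val_natCast_of_lt hi]
  · rw [List.head?_eq_getElem?] at hs
    obtain ⟨_, hs⟩ := List.getElem?_eq_some_iff.1 hs
    simp only [Equiv.ofBijective_apply, f, ZMod.natCast_self, ZMod.val_zero, hs]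
    simp only [← hlen, List.getElem_concat_length]

theorem exists_isHamOrientedCycle (hC : C.Nodup) (hall : ∀ v, v ∈ C) (hs : C.head? = some s)
    (hchain : (C ++ [s]).IsChain (underlyingGraph A).Adj) :
    ∃ e, IsHamOrientedCycle A e ∧ sigmaPlus A e + defect A (C ++ [s]) = Fintype.card V := by
  obtain ⟨e, he⟩ := exists_zmod_equiv_map_range_eq hC hall hs
  have : NeZero (Fintype.card V) := ⟨(Fintype.card_pos_iff.2 ⟨s⟩).ne'⟩
  refine ⟨e, fun i => ?_, ?_⟩
  · rw [← he, ← defect_eq_zero_iff, defect_map_range_succ, Finset.card_eq_zero,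
      Finset.filter_eq_empty_iff] at hchain
    have := hchain (Finset.mem_range.2 i.val_lt)
    rw [not_not, Nat.cast_add_one, ZMod.natCast_zmod_val] at this
    exact (underlyingGraph_adj.1 this).2
  · rw [sigmaPlus, card_subtype_zmod, ← he, defect_map_range_succ]
    simpa using Finset.card_filter_add_card_filter_not (s := Finset.range (Fintype.card V))
      fun i : ℕ => A (e i) (e (i + 1))

end Cycle

section OreClique

variable [Fintype V] {K : Finset V} {k : ℕ} {v₀ x : V}

theorem deg_eq_degree (hA : ∀ v, ¬ A v v) (v : V) : deg A v = (underlyingGraph A).degree v := by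
  rw [deg, Nat.card_eq_fintype_card, Fintype.card_subtype,
    ← SimpleGraph.card_neighborFinset_eq_degree]
  congr 1
  ext u
  simp only [Finset.mem_filter, Finset.mem_univ, true_and, SimpleGraph.mem_neighborFinset,
    underlyingGraph_adj, iff_and_self]
  rintro h rfl
  exact hA v (or_self_iff.1 h)

theorem codegIn_compl_add_two_le (hx : x ≠ v₀) (hadj : ¬ G.Adj v₀ x)
    (hdeg : Fintype.card V ≤ G.degree v₀ + G.degree x) :
    codegIn G (insert v₀ (G.neighborFinset v₀))ᶜ x + 2 ≤
      #{u ∈ G.neighborFinset v₀ | G.Adj x u} := by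
  have h₁ := card_adj_add_codegIn_add_one (G := G) (Finset.mem_univ x)
  have h₂ := codegIn_add_codegIn_sdiff (G := G)
    (Finset.subset_univ (insert v₀ (G.neighborFinset v₀))) x
  have h₃ := card_adj_add_codegIn (G := G) (u := x) (S := insert v₀ (G.neighborFinset v₀))
    (by simp [hx, hadj])
  rw [Finset.filter_insert, if_neg (mt SimpleGraph.Adj.symm hadj),
    Finset.card_insert_of_notMem (G.notMem_neighborFinset_self v₀),
    G.card_neighborFinset_eq_degree] at h₃
  rw [← G.neighborFinset_eq_filter, G.card_neighborFinset_eq_degree, Finset.card_univ] at h₁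
  rw [← Finset.compl_eq_univ_sdiff] at h₂
  omega

theorem exists_isHamOrientedCycle_of_isClique (hK : (underlyingGraph A).IsClique K)
    (hcodeg : ∀ x ∈ Kᶜ, codegIn (underlyingGraph A) Kᶜ x ≤ k) (hcard : 2 * k + 3 ≤ #Kᶜ)
    (hnbr : ∀ x ∈ Kᶜ, 1 < #{u ∈ K | (underlyingGraph A).Adj x u}) :
    ∃ e, IsHamOrientedCycle A e ∧ Fintype.card V ≤ sigmaPlus A e + k + 4 := by
  obtain ⟨L, hL, hlen, hdef⟩ := hasForwardHamPath A Kᶜ k hcodeg hcard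
  have hL₀ : L ≠ [] := by rintro rfl; rw [List.length_nil] at hlen; omega
  obtain ⟨s, hs⟩ : ∃ s, L.head? = some s := ⟨_, List.head?_eq_some_head hL₀⟩
  obtain ⟨t, ht⟩ : ∃ t, L.getLast? = some t := ⟨_, List.getLast?_eq_some_getLast hL₀⟩
  obtain ⟨y, hy⟩ := Finset.card_pos.1 (Nat.zero_lt_of_lt
    (hnbr t (hL.mem t (List.mem_of_mem_getLast? ht))))
  obtain ⟨y', hy', hne⟩ := Finset.exists_mem_ne (hnbr s (hL.mem s (List.mem_of_mem_head? hs))) y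
  rw [Finset.mem_filter] at hy hy'
  obtain ⟨M, hM, hMlen, hMy, hMy', hMdef⟩ :=
    exists_isPathIn_between_of_isClique hK hy.1 hy'.1 hne.symm
  have hLM : IsPathIn (underlyingGraph A) Finset.univ (L ++ M) := by
    refine (hL.mono (Finset.subset_univ _)).append (hM.mono (Finset.subset_univ _))
      (fun x hxL hxM => Finset.mem_compl.1 (hL.mem x hxL) (hM.mem x hxM)) ?_
    simpa [ht, hMy] using hy.2
  have hall (v : V) : v ∈ L ++ M := by
    rw [← List.mem_toFinset, hLM.toFinset_eq]
    · exact Finset.mem_univ v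
    · rw [List.length_append, hlen, hMlen, Finset.card_compl_add_card, Finset.card_univ]
  have hchain : ((L ++ M) ++ [s]).IsChain (underlyingGraph A).Adj := by
    refine List.isChain_append.2 ⟨hLM.isChain, List.isChain_singleton s, ?_⟩
    simpa [List.getLast?_append, hMy'] using hy'.2.symm
  obtain ⟨e, he, hsigma⟩ := exists_isHamOrientedCycle hLM.nodup hall
    (by rw [List.head?_append_of_ne_nil _ hL₀, hs]) hchain
  refine ⟨e, he, ?_⟩
  have h₁ := defect_append_le (R := A) (L ++ M) [s]
  have h₂ := defect_append_le (R := A) L M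
  rw [defect_singleton] at h₁
  omega

theorem exists_isHamOrientedCycle_of_isClique_neighborFinset
    (hclique : (underlyingGraph A).IsClique
      (insert v₀ ((underlyingGraph A).neighborFinset v₀) : Finset V))
    (hpos : 0 < (underlyingGraph A).degree v₀)
    (hcard : 3 * (underlyingGraph A).degree v₀ ≤ Fintype.card V)
    (hore : ∀ x, x ≠ v₀ → ¬ (underlyingGraph A).Adj v₀ x →
      Fintype.card V ≤ (underlyingGraph A).degree v₀ + (underlyingGraph A).degree x) :
    ∃ e, IsHamOrientedCycle A e ∧
      Fintype.card V ≤ sigmaPlus A e + (underlyingGraph A).degree v₀ + 2 := by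
  set N := (underlyingGraph A).neighborFinset v₀ with hN
  set δ := (underlyingGraph A).degree v₀
  have hNδ : #N = δ := (underlyingGraph A).card_neighborFinset_eq_degree v₀
  have hcodeg : ∀ x ∈ (insert v₀ N)ᶜ, codegIn (underlyingGraph A) (insert v₀ N)ᶜ x + 2 ≤
      #{u ∈ N | (underlyingGraph A).Adj x u} := by
    intro x hx
    simp only [hN, Finset.mem_compl, Finset.mem_insert, SimpleGraph.mem_neighborFinset,
      not_or] at hx
    exact codegIn_compl_add_two_le hx.1 hx.2 (hore x hx.1 hx.2)
  have hle x : #{u ∈ N | (underlyingGraph A).Adj x u} ≤ δ := hNδ ▸ Finset.card_filter_le _ _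
  have hcompl : #(insert v₀ N)ᶜ + (δ + 1) = Fintype.card V := by
    rw [← hNδ, ← Finset.card_insert_of_notMem ((underlyingGraph A).notMem_neighborFinset_self v₀),
      Finset.card_compl_add_card]
  obtain ⟨x, hx⟩ := Finset.card_pos.1 (show 0 < #(insert v₀ N)ᶜ by omega)
  have hδ : 2 ≤ δ := (Nat.le_add_left ..).trans ((hcodeg x hx).trans (hle x))
  obtain ⟨e, he, hsigma⟩ := exists_isHamOrientedCycle_of_isClique (k := δ - 2) hclique
    (fun x hx => by have := hcodeg x hx; have := hle x; omega) (by omega)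
    (fun x hx => (Nat.le_of_add_left_le (hcodeg x hx)).trans
      (Finset.card_le_card (Finset.filter_subset_filter _ (N.subset_insert v₀))))
  exact ⟨e, he, by omega⟩

theorem isClique_insert_neighborFinset
    (htour : ∀ u v : V, (A v₀ u ∨ A u v₀) → (A v₀ v ∨ A v v₀) → u ≠ v → A u v ∨ A v u) :
    (underlyingGraph A).IsClique
      (insert v₀ ((underlyingGraph A).neighborFinset v₀) : Finset V) := by
  rw [Finset.coe_insert, SimpleGraph.isClique_insert]
  refine ⟨fun u hu v hv huv => ⟨huv, ?_⟩, fun u hu _ => by simpa using hu⟩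
  simp only [SimpleGraph.coe_neighborFinset, SimpleGraph.mem_neighborSet] at hu hv
  exact htour u v hu.2 hv.2 huv

end OreClique

theorem stmt19_general {V : Type*} [Fintype V] (A : V → V → Prop) (hA : ∀ v, ¬ A v v)
    (δ : ℕ) (hδ : 0 < δ) (hδn : 3 * δ ≤ Fintype.card V)
    (v₀ : V) (hv₀ : deg A v₀ = δ)
    (hore : ∀ v, v ≠ v₀ → ¬ A v₀ v → ¬ A v v₀ → Fintype.card V ≤ δ + deg A v)
    (htour : ∀ u v : V, (A v₀ u ∨ A u v₀) → (A v₀ v ∨ A v v₀) → u ≠ v →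
      A u v ∨ A v u) :
    ∃ e : ZMod (Fintype.card V) ≃ V, IsHamOrientedCycle A e ∧
      Fintype.card V - δ - 2 ≤ sigmaMax A e := by
  rw [deg_eq_degree hA] at hv₀
  subst hv₀
  obtain ⟨e, he, hsigma⟩ := exists_isHamOrientedCycle_of_isClique_neighborFinset
    (isClique_insert_neighborFinset htour) hδ hδn fun x hx hadj => by
      rw [← deg_eq_degree hA x]
      exact hore x hx (fun h => hadj ⟨hx.symm, .inl h⟩) (fun h => hadj ⟨hx.symm, .inr h⟩)
  exact ⟨e, he, by rw [sigmaMax]; omega⟩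

end

/-- If `D` is an oriented graph on `n` vertices with minimum degree `δ`,
`3 ≤ δ ≤ n/3`, satisfying the Ore-type condition, and there is a vertex `v₀` of degree
`δ` whose neighbourhood induces a tournament, then `D` has a Hamilton oriented cycle
`C` with `σ_max(C) ≥ n - δ - 2`. -/
theorem stmt19 {V : Type*} [Fintype V] (A : V → V → Prop) (hA : IsOriented A)
    (δ : ℕ) (hδmin : ∀ v, δ ≤ deg A v)
    (hδ3 : 3 ≤ δ) (hδn : 3 * δ ≤ Fintype.card V)
    (hore : ∀ u v : V, u ≠ v → ¬ A u v → ¬ A v u →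
      Fintype.card V ≤ deg A u + deg A v)
    (v₀ : V) (hv₀ : deg A v₀ = δ)
    (htour : ∀ u v : V, (A v₀ u ∨ A u v₀) → (A v₀ v ∨ A v v₀) → u ≠ v →
      A u v ∨ A v u) :
    ∃ e : ZMod (Fintype.card V) ≃ V, IsHamOrientedCycle A e ∧
      Fintype.card V - δ - 2 ≤ sigmaMax A e := by
  exact stmt19_general A (fun v h => (hA v v h).1 rfl) δ (by omega) hδn v₀ hv₀
    (fun v hv h h' => hv₀ ▸ hore v₀ v hv.symm h h') htour
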